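/- (Theorem 2, forward direction.) Let M ≥ 1, let permutations Π_{j,i} of S = {1,…,M} be given for each j ∈ L, i ∈ I_j, and let x^{(M)} be a valid cover configuration of degree M (a graph-cover pseudoconfiguration). Define ḡ by g_i^{(α)} = |{l ∈ S : x_{i,l} = α}|/M for i ∈ I, α ∈ A_i, and p by p_{j,b} = |{l ∈ S : x_{j,l} = b}|/M for j ∈ L, b ∈ B_j. Then (ḡ, p) ∈ Q; that is, the normalized graph-cover pseudoconfiguration vector is an LP pseudoconfiguration. -/

import Mathlib

open Finset

/-! For each check `j` the vector `p j` is the empirical distribution of the local configurations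
`x_{j,l}` as `l` ranges over the sheets of the cover; validity makes it a distribution on `B_j`.
Its marginal at `i ∈ I_j` is the empirical distribution of `l ↦ x_{i, Π_{j,i}(l)}`. A permutation
of the sheets does not change an empirical distribution, so the marginal is that of `x_i`, which
is `g_i` whatever `j` is. -/

section RelFreq

variable {S T α β : Type*} [Fintype S] [Fintype T] [DecidableEq α] [DecidableEq β]

/-- The relative frequency of the value `a` in the finite family `y`, that is, the mass of `a` in
the empirical distribution of `y`. It is the junk value `0` for an empty family. -/
def relFreq (K : Type*) [DivisionSemiring K] (y : S → α) (a : α) : K :=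
  (#{l | y l = a} : K) / Fintype.card S

theorem relFreq_nonneg {K : Type*} [Semifield K] [LinearOrder K] [IsStrictOrderedRing K]
    (y : S → α) (a : α) : 0 ≤ relFreq K y a :=
  div_nonneg (Nat.cast_nonneg _) (Nat.cast_nonneg _)

variable (K : Type*) [DivisionSemiring K]

theorem relFreq_comp_equiv (e : S ≃ T) (y : T → α) (a : α) :
    relFreq K (y ∘ e) a = relFreq K y a := by
  have card_fiber : #{l | (y ∘ e) l = a} = #{l | y l = a} :=
    card_equiv e (by simp)
  rw [relFreq, relFreq, card_fiber, Fintype.card_congr e]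

variable {y : S → α} {t : Finset α}

theorem sum_relFreq_eq_one [CharZero K] [Nonempty S] (hy : ∀ l, y l ∈ t) :
    ∑ a ∈ t, relFreq K y a = 1 := by
  simp only [relFreq]
  rw [← sum_div, ← Nat.cast_sum, ← card_eq_sum_card_fiberwise fun l _ => hy l, card_univ]
  exact div_self (Nat.cast_ne_zero.2 Fintype.card_ne_zero)

theorem relFreq_comp_eq_sum (hy : ∀ l, y l ∈ t) (f : α → β) (c : β) :
    relFreq K (f ∘ y) c = ∑ a ∈ t with f a = c, relFreq K y a := by
  have card_fiber : #{l | (f ∘ y) l = c} = ∑ a ∈ t with f a = c, #{l | y l = a} := by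
    rw [card_eq_sum_card_fiberwise (f := y) (t := {a ∈ t | f a = c})
      fun l hl => by simpa [hy l] using hl]
    refine sum_congr rfl fun a ha => ?_
    rw [filter_filter]
    congr 1 with l
    simp only [mem_filter, mem_univ, true_and, Function.comp_apply, and_iff_right_iff_imp]
    rintro rfl
    exact (mem_filter.1 ha).2
  simp only [relFreq]
  rw [card_fiber, Nat.cast_sum, sum_div]

end RelFreq

section Cover

variable {I L S : Type*} {A : I → Type*} {J : L → Set I}

/-- The local configuration `x_{j,l}` of the cover configuration `x` at the `l`-th copy of the
check `j`; the cover is given by the permutations `π j i` of the set `S` of sheets. -/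
def localConfig (π : ∀ j, J j → Equiv.Perm S) (x : ∀ i, S → A i) (j : L) (l : S) :
    ∀ i : J j, A i :=
  fun i => x i (π j i l)

variable [∀ i, DecidableEq (A i)] [Fintype S] [∀ j, DecidableEq (∀ i : J j, A i)]
  {B : ∀ j : L, Finset (∀ i : J j, A i)} {π : ∀ j, J j → Equiv.Perm S} {x : ∀ i, S → A i}
  {K : Type*} [Semifield K]

theorem relFreq_eq_sum_relFreq_localConfig (j : L) (i : J j)
    (hvalid : ∀ l, localConfig π x j l ∈ B j) (α : A i) :
    relFreq K (x i) α = ∑ b ∈ B j with b i = α, relFreq K (localConfig π x j) b :=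
  calc relFreq K (x i) α
    _ = relFreq K (x i ∘ π j i) α := (relFreq_comp_equiv K (π j i) (x i) α).symm
    _ = ∑ b ∈ B j with b i = α, relFreq K (localConfig π x j) b :=
      relFreq_comp_eq_sum K hvalid (fun b => b i) α

variable [LinearOrder K]

/-- The polytope `Q` of LP pseudoconfigurations `(g, p)` of the local behaviours `B j`, with
coordinates in an ordered semifield `K`. -/
def lpPolytope (B : ∀ j : L, Finset (∀ i : J j, A i)) :
    Set ((∀ i, A i → K) × (∀ j, B j → K)) :=
  {q | (∀ j b, 0 ≤ q.2 j b) ∧ (∀ j, ∑ b, q.2 j b = 1) ∧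
    ∀ (j : L) (i : I) (hij : i ∈ J j) (α : A i),
      q.1 i α = ∑ b : B j, if b.1 ⟨i, hij⟩ = α then q.2 j b else 0}

theorem stmt_12_general [IsStrictOrderedRing K] [Nonempty S]
    (hvalid : ∀ j l, localConfig π x j l ∈ B j)
    {g : ∀ i, A i → K} (hg : ∀ i α, g i α = relFreq K (x i) α)
    {p : ∀ j, B j → K} (hp : ∀ j b, p j b = relFreq K (localConfig π x j) b.1) :
    (g, p) ∈ lpPolytope B := by
  refine ⟨fun j b => ?nonneg, fun j => ?total_mass, fun j i hij α => ?marginal⟩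
  case nonneg => exact (relFreq_nonneg _ _).trans_eq (hp j b).symm
  case total_mass =>
    simp only [hp]
    rw [sum_coe_sort (B j) (relFreq K (localConfig π x j)), sum_relFreq_eq_one K (hvalid j)]
  case marginal =>
    simp only [hg, hp]
    rw [sum_coe_sort (B j) fun b => if b ⟨i, hij⟩ = α then relFreq K (localConfig π x j) b else 0,
      ← sum_filter]
    exact relFreq_eq_sum_relFreq_localConfig j ⟨i, hij⟩ (hvalid j) α

end Cover

/-- Theorem 2, forward direction: Given a degree-`M` cover
(specified by permutations `Π_{j,i}` of `S = {1,…,M}`) and a valid cover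
configuration `x^{(M)}` (a graph-cover pseudoconfiguration), the vectors
`g_i^{(α)} = |{l ∈ S : x_{i,l} = α}|/M` and `p_{j,b} = |{l ∈ S : x_{j,l} = b}|/M`
satisfy `(ḡ, p) ∈ Q`; i.e., the normalized graph-cover pseudoconfiguration
vector is an LP pseudoconfiguration. -/
theorem stmt_12
    {I : Type} [Fintype I] [DecidableEq I]
    (A : I → Type) [∀ i, Fintype (A i)] [∀ i, DecidableEq (A i)]
    (hcard : ∀ i, 2 ≤ Fintype.card (A i))
    {L : Type} [Fintype L]
    (Ij : L → Finset I) (hIj : ∀ j, (Ij j).Nonempty)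
    (Bj : ∀ j : L, Finset (∀ i : Ij j, A i.1))
    -- the degree of the cover
    (M : ℕ) (hM : 0 < M)
    -- the permutations Π_{j,i}
    (Pm : ∀ j : L, ∀ i : Ij j, Equiv.Perm (Fin M))
    -- a cover configuration of degree M
    (x : ∀ i : I, Fin M → A i)
    -- validity: x_{j,l} ∈ B_j for all j ∈ L, l ∈ S
    (hvalid : ∀ (j : L) (l : Fin M),
      (fun i : Ij j => x i.1 (Pm j i l)) ∈ Bj j)
    -- the normalized graph-cover pseudoconfiguration vector ḡ
    (g : ∀ i : I, A i → ℝ)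
    (hg : ∀ (i : I) (α : A i),
      g i α = ((univ.filter fun l : Fin M => x i l = α).card : ℝ) / M)
    -- the associated p
    (p : ∀ j : L, {b // b ∈ Bj j} → ℝ)
    (hp : ∀ (j : L) (b : Bj j),
      p j b = ((univ.filter fun l : Fin M =>
        (fun i : Ij j => x i.1 (Pm j i l)) = b.1).card : ℝ) / M) :
    -- (ḡ, p) satisfies the defining constraints of Q
    (∀ (j : L) (b : Bj j), 0 ≤ p j b)
      ∧ (∀ j : L, ∑ b : Bj j, p j b = 1)
      ∧ (∀ (j : L) (i : I) (hij : i ∈ Ij j) (α : A i),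
          g i α = ∑ b : Bj j, if b.1 ⟨i, hij⟩ = α then p j b else 0) := by
  have : Nonempty (Fin M) := Fin.pos_iff_nonempty.1 hM
  have mem_Q : (g, p) ∈ lpPolytope (A := A) (J := fun j => (Ij j : Set I)) Bj := by
    refine stmt_12_general (π := Pm) (x := x) hvalid ?_ ?_ <;>
      simp only [relFreq, Fintype.card_fin]
    exacts [hg, hp]
  exact mem_Q
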